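/- For every odd integer n ≥ 9, there exists a deeply critical oriented clique on n vertices. -/

import Mathlib

/-- An oriented graph: a directed graph whose arc relation is irreflexive and
antisymmetric (no loops, and never both arcs `xy` and `yx`). -/
structure OrientedGraph (V : Type) where
  adj : V → V → Prop
  irrefl : ∀ v, ¬ adj v v
  antisymm : ∀ u v, adj u v → ¬ adj v u

namespace OrientedGraph

variable {V : Type}

/-- An oriented `k`-colouring of `G`. -/
def IsColoring (G : OrientedGraph V) {k : ℕ} (φ : V → Fin k) : Prop :=
  (∀ x y, G.adj x y → φ x ≠ φ y) ∧
  (∀ x y u v, G.adj x y → G.adj u v → φ x = φ v → φ y ≠ φ u)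

/-- The oriented chromatic number: the least `k` admitting an oriented `k`-colouring. -/
noncomputable def chromNum (G : OrientedGraph V) : ℕ :=
  sInf {k : ℕ | ∃ φ : V → Fin k, G.IsColoring φ}

/-- `G` with the arc `xy` removed. -/
def deleteArc (G : OrientedGraph V) (x y : V) : OrientedGraph V where
  adj a b := G.adj a b ∧ ¬(a = x ∧ b = y)
  irrefl v h := G.irrefl v h.1
  antisymm u v h h' := G.antisymm u v h.1 h'.1

/-- An absolute oriented clique: `χo(G) = |V(G)|`. -/
def IsAbsoluteClique (G : OrientedGraph V) : Prop :=
  G.chromNum = Nat.card V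

/-- A deeply critical oriented graph: removing any arc drops `χo` by exactly 2. -/
def IsDeeplyCritical (G : OrientedGraph V) : Prop :=
  ∀ x y, G.adj x y → (G.deleteArc x y).chromNum = G.chromNum - 2

/-- A deeply critical oriented clique. -/
def IsDeeplyCriticalClique (G : OrientedGraph V) : Prop :=
  G.IsDeeplyCritical ∧ G.IsAbsoluteClique

/-- An extending partition `X 0 ⊔ X 1 ⊔ X 2` of `G` (indices mod 3). -/
def IsExtendingPartition (G : OrientedGraph V) (X : Fin 3 → Set V) : Prop :=
  (∀ v : V, ∃! i : Fin 3, v ∈ X i) ∧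
  (∀ i : Fin 3, ∀ u ∈ X (i + 1), ∀ v ∈ X i, ¬ G.adj u v) ∧
  (∀ i : Fin 3, ∀ u ∈ X i, ∃ v ∈ X (i + 1), {w | w ∈ X i ∧ G.adj w v} = {u}) ∧
  (∀ i : Fin 3, ∀ v ∈ X (i + 1), ∃ u ∈ X i, {w | w ∈ X (i + 1) ∧ G.adj u w} = {v})

/-- An oriented graph is extendable when it admits an extending partition. -/
def Extendable (G : OrientedGraph V) : Prop :=
  ∃ X : Fin 3 → Set V, G.IsExtendingPartition X

/-- Induced subgraph on the vertices satisfying `P`. -/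
def induce (G : OrientedGraph V) (P : V → Prop) : OrientedGraph {v // P v} where
  adj a b := G.adj a.1 b.1
  irrefl a := G.irrefl a.1
  antisymm a b h := G.antisymm a.1 b.1 h

end OrientedGraph

/-- The new vertex `xᵢ⁻` of the 6-extension (for `i ∈ Fin 3`, representing `X_{i+1}`). -/
abbrev xminus (i : Fin 3) : Fin 6 := ⟨2 * i.1, by omega⟩

/-- The new vertex `xᵢ⁺` of the 6-extension. -/
abbrev xplus (i : Fin 3) : Fin 6 := ⟨2 * i.1 + 1, by omega⟩

/-- The arcs among the six new vertices:
`x₁⁻x₂⁺, x₁⁺x₂⁻, x₂⁻x₃⁺, x₂⁺x₃⁻, x₃⁻x₁⁺, x₃⁺x₁⁻`. -/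
abbrev extraAdj (s t : Fin 6) : Prop :=
  ∃ i : Fin 3, (s = xminus i ∧ t = xplus (i + 1)) ∨ (s = xplus i ∧ t = xminus (i + 1))

lemma extra_irrefl : ∀ s : Fin 6, ¬ extraAdj s s := by decide

lemma extra_antisymm : ∀ s t : Fin 6, extraAdj s t → ¬ extraAdj t s := by decide

/-- The 6-extension of `G` with respect to the partition `X`. -/
def sixExtension {V : Type} (G : OrientedGraph V) (X : Fin 3 → Set V) :
    OrientedGraph (V ⊕ Fin 6) where
  adj a b :=
    match a, b with
    | Sum.inl u, Sum.inl v => G.adj u v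
    | Sum.inr s, Sum.inl v => ∃ i : Fin 3, s = xminus i ∧ v ∈ X i
    | Sum.inl u, Sum.inr s => ∃ i : Fin 3, s = xplus i ∧ u ∈ X i
    | Sum.inr s, Sum.inr t => extraAdj s t
  irrefl v := by
    cases v with
    | inl u => exact G.irrefl u
    | inr s => exact extra_irrefl s
  antisymm a b h h' := by
    cases a with
    | inl u =>
      cases b with
      | inl v => exact G.antisymm u v h h'
      | inr s =>
        obtain ⟨i, hi, -⟩ := h
        obtain ⟨j, hj, -⟩ := h'
        have := congrArg Fin.val (hi.symm.trans hj)
        simp at this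
        omega
    | inr s =>
      cases b with
      | inl v =>
        obtain ⟨i, hi, -⟩ := h
        obtain ⟨j, hj, -⟩ := h'
        have := congrArg Fin.val (hi.symm.trans hj)
        simp at this
        omega
      | inr t => exact extra_antisymm s t h h'

/-- The 4-extension of `G`: the subgraph of the 6-extension induced by deleting
`x₁⁺` and `x₂⁻`. -/
def fourExtension {V : Type} (G : OrientedGraph V) (X : Fin 3 → Set V) :
    OrientedGraph {v : V ⊕ Fin 6 // v ≠ Sum.inr (xplus 0) ∧ v ≠ Sum.inr (xminus 1)} :=
  (sixExtension G X).induce _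

/-- The 2-extension of `G`: the subgraph of the 6-extension induced by deleting
`x₁⁻`, `x₂⁺`, `x₃⁻` and `x₃⁺`. -/
def twoExtension {V : Type} (G : OrientedGraph V) (X : Fin 3 → Set V) :
    OrientedGraph {v : V ⊕ Fin 6 //
      v ≠ Sum.inr (xminus 0) ∧ v ≠ Sum.inr (xplus 1) ∧
      v ≠ Sum.inr (xminus 2) ∧ v ≠ Sum.inr (xplus 2)} :=
  (sixExtension G X).induce _

/-- The oriented circulant graph `C(n, S)`: vertex set `ZMod n`, with an arc from `i`
to `j` whenever `j - i ∈ S`. -/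
def circulant (n : ℕ) (S : Set (ZMod n)) (hS : ∀ k : ZMod n, k ∈ S → -k ∉ S) :
    OrientedGraph (ZMod n) where
  adj i j := j - i ∈ S
  irrefl i h := hS (i - i) h (by simpa using h)
  antisymm i j h h' := hS (j - i) h (by simpa [neg_sub] using h')

/-!
Say that two vertices see each other if they are adjacent or are the ends of a directed 2-path. An
absolute oriented clique is a graph in which any two vertices see each other. Deleting an arc from
it can only affect pairs containing an end of that arc, so the chromatic number drops by at most 2,
and it drops by 2 as soon as two disjoint pairs of vertices can be identified simultaneously.

Extending a deeply critical clique by new vertices `xᵢ⁺`, `xᵢ₊₁⁻` along an extending partition gives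
a deeply critical clique: for an old arc the saving is inherited, and for a new arc the two pairs
are found by hand. A 6-extension is again extendable. Starting from the 6-extension of the directed
triangle, 6-extensions give all orders `9 + 6k`, and a final 2- or 4-extension gives the rest.
-/

namespace OrientedGraph

variable {V W ι : Type} {G : OrientedGraph V}

section Colouring

/-- Two vertices see each other if they are adjacent or are the ends of a directed 2-path; this
is exactly when every oriented colouring gives them different colours. -/
def Sees (G : OrientedGraph V) (u v : V) : Prop :=
  G.adj u v ∨ G.adj v u ∨ (∃ w, G.adj u w ∧ G.adj w v) ∨ (∃ w, G.adj v w ∧ G.adj w u)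

/-- An oriented colouring with colours in an arbitrary type. Condition (i) of `IsColoring` is
omitted, being the case `(u, v) = (x, y)` of condition (ii). -/
def IsColoringBy {C : Type*} (G : OrientedGraph V) (f : V → C) : Prop :=
  ∀ x y u v, G.adj x y → G.adj u v → f x = f v → f y ≠ f u

lemma Sees.symm {u v : V} (h : G.Sees u v) : G.Sees v u := by
  rcases h with h | h | h | h
  exacts [.inr (.inl h), .inl h, .inr (.inr (.inr h)), .inr (.inr (.inl h))]

lemma isColoring_iff {k : ℕ} {φ : V → Fin k} : G.IsColoring φ ↔ G.IsColoringBy φ :=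
  ⟨And.right, fun h => ⟨fun x y hxy e => h x y x y hxy hxy e e.symm, h⟩⟩

lemma IsColoringBy.comp_injective {C D : Type*} {f : V → C} (hf : G.IsColoringBy f) {g : C → D}
    (hg : Function.Injective g) : G.IsColoringBy (g ∘ f) :=
  fun x y u v hxy huv e e' => hf x y u v hxy huv (hg e) (hg e')

lemma IsColoringBy.ne_of_sees {C : Type*} {f : V → C} (hf : G.IsColoringBy f) {u v : V}
    (h : G.Sees u v) : f u ≠ f v := by
  intro e
  rcases h with h | h | ⟨w, h, h'⟩ | ⟨w, h, h'⟩
  · exact hf u v u v h h e e.symm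
  · exact hf v u v u h h e.symm e
  · exact hf u w w v h h' e rfl
  · exact hf v w w u h h' e.symm rfl

lemma IsColoringBy.chromNum_le {C : Type*} [Finite C] {f : V → C} (hf : G.IsColoringBy f) :
    G.chromNum ≤ Nat.card C :=
  Nat.sInf_le ⟨_, isColoring_iff.2 (hf.comp_injective (Finite.equivFin C).injective)⟩

lemma isColoringBy_id (G : OrientedGraph V) : G.IsColoringBy id := by
  rintro x y u v hxy huv rfl rfl
  exact G.antisymm _ _ hxy huv

lemma exists_isColoringBy_fin_chromNum [Finite V] (G : OrientedGraph V) :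
    ∃ φ : V → Fin G.chromNum, G.IsColoringBy φ := by
  have hne : {k : ℕ | ∃ φ : V → Fin k, G.IsColoring φ}.Nonempty :=
    ⟨_, _, isColoring_iff.2 (G.isColoringBy_id.comp_injective (Finite.equivFin V).injective)⟩
  obtain ⟨φ, hφ⟩ := Nat.sInf_mem hne
  exact ⟨φ, isColoring_iff.1 hφ⟩

lemma chromNum_le_card [Finite V] (G : OrientedGraph V) : G.chromNum ≤ Nat.card V :=
  G.isColoringBy_id.chromNum_le

lemma ncard_le_chromNum [Finite V] {s : Set V} (hs : s.Pairwise G.Sees) :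
    s.ncard ≤ G.chromNum := by
  obtain ⟨φ, hφ⟩ := G.exists_isColoringBy_fin_chromNum
  have hinj : Set.InjOn φ s := fun u hu v hv e =>
    by_contra fun hne => hφ.ne_of_sees (hs hu hv hne) e
  calc s.ncard ≤ (Set.univ : Set (Fin G.chromNum)).ncard :=
        Set.ncard_le_ncard_of_injOn φ (fun _ _ => Set.mem_univ _) hinj
    _ = G.chromNum := by rw [Set.ncard_univ, Nat.card_fin]

lemma IsColoringBy.chromNum_add_ncard_le [Finite V] {f : V → V} (hf : G.IsColoringBy f)
    {s : Set V} (hs : ∀ x, f x ∉ s) : G.chromNum + s.ncard ≤ Nat.card V := by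
  have hcol : G.IsColoringBy (fun x => (⟨f x, hs x⟩ : ↥sᶜ)) :=
    fun x y u v hxy huv hxv hyu =>
      hf x y u v hxy huv (congrArg Subtype.val hxv) (congrArg Subtype.val hyu)
  calc G.chromNum + s.ncard ≤ sᶜ.ncard + s.ncard := Nat.add_le_add_right hcol.chromNum_le _
    _ = Nat.card V := by rw [add_comm, Set.ncard_add_ncard_compl]

end Colouring

section Identification

/-- Two disjoint pairs `{a, b}` and `{c, d}`, neither of which sees itself, such that all arcs
between them point from `{a, b}` to `{c, d}`: identifying `a` with `b` and `c` with `d` is then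
an oriented colouring. -/
structure MergeablePairs (G : OrientedGraph V) (a b c d : V) : Prop where
  nodup : [a, b, c, d].Nodup
  not_sees_left : ¬ G.Sees a b
  not_sees_right : ¬ G.Sees c d
  not_adj : ∀ x ∈ [c, d], ∀ y ∈ [a, b], ¬ G.adj x y

/-- If no two vertices of the same colour see each other, then the only obstruction to being a
colouring is a pair of vertex-disjoint arcs joining two colour classes in opposite directions. -/
lemma isColoringBy_of_not_sees {C : Type*} {f : V → C}
    (hf : ∀ x y, x ≠ y → f x = f y → ¬ G.Sees x y)
    (hdisj : ∀ x y u v, G.adj x y → G.adj u v → f x = f v → f y = f u → x = v ∨ y = u) :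
    G.IsColoringBy f := by
  intro x y u v hxy huv hxv hyu
  rcases hdisj x y u v hxy huv hxv hyu with rfl | rfl
  · by_cases h : y = u
    · subst h
      exact G.antisymm _ _ hxy huv
    · exact hf y u h hyu (.inr (.inr (.inr ⟨x, huv, hxy⟩)))
  · by_cases h : x = v
    · subst h
      exact G.antisymm _ _ hxy huv
    · exact hf x v h hxv (.inr (.inr (.inl ⟨y, hxy, huv⟩)))

lemma not_adj_of_apply_eq {C : Type*} {f : V → C}
    (hf : ∀ x y, x ≠ y → f x = f y → ¬ G.Sees x y) {x y : V} (h : f x = f y) : ¬ G.adj x y := by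
  intro hxy
  have hne : x ≠ y := by
    rintro rfl
    exact G.irrefl x hxy
  exact hf x y hne h (.inl hxy)

open Classical in
lemma isColoringBy_update_id {a b : V} (h : ¬ G.Sees a b) :
    G.IsColoringBy (Function.update id a b) := by
  have hfib : ∀ x y, x ≠ y → Function.update id a b x = Function.update id a b y →
      x = a ∧ y = b ∨ x = b ∧ y = a := by
    intro x y
    simp only [Function.update_apply, id]
    grind
  have hsees : ∀ x y, x ≠ y → Function.update id a b x = Function.update id a b y →
      ¬ G.Sees x y := by
    intro x y hne e
    rcases hfib x y hne e with ⟨rfl, rfl⟩ | ⟨rfl, rfl⟩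
    · exact h
    · exact fun h' => h h'.symm
  refine isColoringBy_of_not_sees hsees fun x y u v hxy _ hxv hyu => ?_
  have hxy' := fun e => not_adj_of_apply_eq hsees e hxy
  have := hfib x v
  have := hfib y u
  grind

open Classical in
lemma MergeablePairs.isColoringBy {a b c d : V} (h : G.MergeablePairs a b c d) :
    G.IsColoringBy (Function.update (Function.update id a b) c d) := by
  obtain ⟨hnodup, hab, hcd, hdir⟩ := h
  simp only [List.nodup_cons, List.mem_cons, List.not_mem_nil, or_false, forall_eq_or_imp,
    forall_eq] at hnodup hdir
  set f := Function.update (Function.update id a b) c d with hf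
  have hfib : ∀ x y, x ≠ y → f x = f y →
      (x = a ∧ y = b ∨ x = b ∧ y = a) ∨ (x = c ∧ y = d ∨ x = d ∧ y = c) := by
    intro x y
    simp only [hf, Function.update_apply, id]
    grind
  have hfab : f a = f b := by
    simp only [hf, Function.update_apply, id]
    grind
  have hfcd : f c = f d := by
    simp only [hf, Function.update_apply, id]
    grind
  have hsees : ∀ x y, x ≠ y → f x = f y → ¬ G.Sees x y := by
    intro x y hne e
    rcases hfib x y hne e with (⟨rfl, rfl⟩ | ⟨rfl, rfl⟩) | (⟨rfl, rfl⟩ | ⟨rfl, rfl⟩)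
    exacts [hab, fun h => hab h.symm, hcd, fun h => hcd h.symm]
  refine isColoringBy_of_not_sees hsees fun x y u v hxy huv hxv hyu => ?_
  by_contra! ⟨hne, hne'⟩
  have hfxy : f x ≠ f y := fun e => not_adj_of_apply_eq hsees e hxy
  have hclass := hfib x v hne hxv
  have hclass' := hfib y u hne' hyu
  clear_value f
  clear hfib hsees
  grind

lemma MergeablePairs.chromNum_add_two_le [Finite V] {a b c d : V}
    (h : G.MergeablePairs a b c d) : G.chromNum + 2 ≤ Nat.card V := by
  classical
  have hnodup := h.nodup
  simp only [List.nodup_cons, List.mem_cons, List.not_mem_nil, or_false] at hnodup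
  have hrange : ∀ x, Function.update (Function.update id a b) c d x ∉ ({a, c} : Set V) := by
    intro x
    simp only [Function.update_apply, id, Set.mem_insert_iff, Set.mem_singleton_iff]
    grind
  rw [← Set.ncard_pair (show a ≠ c by grind)]
  exact h.isColoringBy.chromNum_add_ncard_le hrange

end Identification

section Cliques

lemma pairwise_sees_of_isAbsoluteClique [Finite V] (hG : G.IsAbsoluteClique) :
    Pairwise G.Sees := by
  classical
  intro a b hne
  by_contra h
  have hrange : ∀ x, Function.update id a b x ∉ ({a} : Set V) := by
    intro x
    simp only [Function.update_apply, id, Set.mem_singleton_iff]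
    grind
  have hle := (isColoringBy_update_id h).chromNum_add_ncard_le hrange
  rw [Set.ncard_singleton, hG] at hle
  omega

theorem isAbsoluteClique_iff_pairwise_sees [Finite V] :
    G.IsAbsoluteClique ↔ Pairwise G.Sees := by
  refine ⟨pairwise_sees_of_isAbsoluteClique, fun h => le_antisymm G.chromNum_le_card ?_⟩
  simpa only [Set.ncard_univ] using ncard_le_chromNum (Set.pairwise_univ.2 h)

lemma Sees.deleteArc {u v x y : V} (h : G.Sees u v) (hu : u ≠ x ∧ u ≠ y) (hv : v ≠ x ∧ v ≠ y) :
    (G.deleteArc x y).Sees u v := by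
  simp only [Sees, OrientedGraph.deleteArc]
  rcases h with h | h | ⟨w, h, h'⟩ | ⟨w, h, h'⟩
  · exact .inl ⟨h, by tauto⟩
  · exact .inr (.inl ⟨h, by tauto⟩)
  · exact .inr (.inr (.inl ⟨w, ⟨h, by tauto⟩, h', by tauto⟩))
  · exact .inr (.inr (.inr ⟨w, ⟨h, by tauto⟩, h', by tauto⟩))

lemma card_sub_two_le_chromNum_deleteArc [Finite V] (hG : Pairwise G.Sees) (x y : V) :
    Nat.card V - 2 ≤ (G.deleteArc x y).chromNum := by
  have hsees : ({x, y}ᶜ : Set V).Pairwise (G.deleteArc x y).Sees := by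
    intro u hu v hv hne
    simp only [Set.mem_compl_iff, Set.mem_insert_iff, Set.mem_singleton_iff, not_or] at hu hv
    exact (hG hne).deleteArc hu hv
  calc Nat.card V - 2 ≤ Nat.card V - ({x, y} : Set V).ncard :=
        Nat.sub_le_sub_left (by simpa using Set.ncard_insert_le x {y}) _
    _ = ({x, y}ᶜ : Set V).ncard := (Set.ncard_compl _).symm
    _ ≤ (G.deleteArc x y).chromNum := ncard_le_chromNum hsees

theorem isDeeplyCriticalClique_iff [Finite V] :
    G.IsDeeplyCriticalClique ↔ Pairwise G.Sees ∧
      ∀ x y, G.adj x y → (G.deleteArc x y).chromNum + 2 ≤ Nat.card V := by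
  rw [IsDeeplyCriticalClique, and_comm, ← isAbsoluteClique_iff_pairwise_sees]
  refine and_congr_right fun hG => forall₃_congr fun x y hxy => ?_
  have hcard : 2 ≤ Nat.card V := by
    have hne : x ≠ y := by
      rintro rfl
      exact G.irrefl x hxy
    simpa only [Set.ncard_pair hne] using Set.ncard_le_card ({x, y} : Set V)
  have hlower := card_sub_two_le_chromNum_deleteArc (pairwise_sees_of_isAbsoluteClique hG) x y
  rw [show G.chromNum = Nat.card V from hG]
  omega

end Cliques

section Comap

/-- The pullback of an oriented graph along a map of vertices. It serves both to relabel vertices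
and to select the new vertices of an extension. -/
def comap (f : W → V) (G : OrientedGraph V) : OrientedGraph W where
  adj a b := G.adj (f a) (f b)
  irrefl a := G.irrefl (f a)
  antisymm a b := G.antisymm (f a) (f b)

lemma ext_adj {G H : OrientedGraph V} (h : ∀ u v, G.adj u v ↔ H.adj u v) : G = H := by
  cases G
  cases H
  congr
  funext u v
  exact propext (h u v)

lemma isColoring_comap_comp_iff (e : W ≃ V) {k : ℕ} (φ : V → Fin k) :
    (G.comap e).IsColoring (φ ∘ e) ↔ G.IsColoring φ := by
  simp only [IsColoring, comap, Function.comp_apply, e.forall_congr_left, e.apply_symm_apply]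

lemma chromNum_comap_equiv (e : W ≃ V) : (G.comap e).chromNum = G.chromNum := by
  unfold chromNum
  congr 1
  ext k
  refine ⟨fun ⟨φ, hφ⟩ => ⟨φ ∘ e.symm, (isColoring_comap_comp_iff e _).1 ?_⟩,
    fun ⟨φ, hφ⟩ => ⟨φ ∘ e, (isColoring_comap_comp_iff e φ).2 hφ⟩⟩
  rwa [Function.comp_assoc, e.symm_comp_self, Function.comp_id]

lemma deleteArc_comap_equiv (e : W ≃ V) (x y : W) :
    (G.comap e).deleteArc x y = (G.deleteArc (e x) (e y)).comap e :=
  ext_adj fun u v => by simp only [deleteArc, comap, e.apply_eq_iff_eq]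

theorem IsDeeplyCriticalClique.comap_equiv (hG : G.IsDeeplyCriticalClique) (e : W ≃ V) :
    (G.comap e).IsDeeplyCriticalClique := by
  refine ⟨fun x y hxy => ?_, ?_⟩
  · rw [deleteArc_comap_equiv, chromNum_comap_equiv, chromNum_comap_equiv]
    exact hG.1 _ _ hxy
  · rw [IsAbsoluteClique, chromNum_comap_equiv, Nat.card_congr e]
    exact hG.2

end Comap

section Extension

/-- A vertex map to `Fin 3` whose fibres form an extending partition. -/
structure IsExtendingMap (G : OrientedGraph V) (p : V → Fin 3) : Prop where
  ne_add_one : ∀ u v, G.adj u v → p u ≠ p v + 1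
  exists_succ : ∀ u, ∃ v, p v = p u + 1 ∧ G.adj u v ∧ ∀ w, p w = p u → G.adj w v → w = u
  exists_pred : ∀ v, ∃ u, p v = p u + 1 ∧ G.adj u v ∧ ∀ w, p w = p v → G.adj u w → w = v

variable {p : V → Fin 3} {c : ι → Fin 3}

lemma isExtendingPartition_fibers_iff :
    G.IsExtendingPartition (fun i => p ⁻¹' {i}) ↔ G.IsExtendingMap p := by
  simp only [IsExtendingPartition, Set.mem_preimage, Set.mem_singleton_iff,
    Set.eq_singleton_iff_unique_mem, Set.mem_ofPred_eq, and_imp]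
  constructor
  · rintro ⟨-, hback, hsucc, hpred⟩
    refine ⟨fun u v huv e => hback (p v) u e v rfl huv, fun u => ?_, fun v => ?_⟩
    · obtain ⟨v, hv, ⟨-, huv⟩, huniq⟩ := hsucc (p u) u rfl
      exact ⟨v, hv, huv, huniq⟩
    · obtain ⟨u, hu, ⟨-, huv⟩, huniq⟩ := hpred (p v - 1) v (by grind)
      exact ⟨u, by grind, huv, by grind⟩
  · rintro ⟨hback, hsucc, hpred⟩
    refine ⟨fun v => existsUnique_eq', ?_, ?_, ?_⟩
    · rintro i u hu v rfl huv
      exact hback u v huv hu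
    · rintro _ u rfl
      obtain ⟨v, hv, huv, huniq⟩ := hsucc u
      exact ⟨v, hv, ⟨rfl, huv⟩, huniq⟩
    · intro i v hv
      obtain ⟨u, hu, huv, huniq⟩ := hpred v
      exact ⟨u, by grind, ⟨hv, huv⟩, by grind⟩

theorem extendable_iff_exists_isExtendingMap :
    G.Extendable ↔ ∃ p, G.IsExtendingMap p := by
  refine ⟨fun ⟨X, hX⟩ => ?_, fun ⟨p, hp⟩ => ⟨_, isExtendingPartition_fibers_iff.2 hp⟩⟩
  choose p hp huniq using hX.1
  have hfib : X = fun i => p ⁻¹' {i} := by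
    funext i
    ext v
    exact ⟨fun hv => (huniq v i hv).symm, fun hv => hv ▸ hp v⟩
  exact ⟨p, isExtendingPartition_fibers_iff.1 (hfib ▸ hX)⟩

lemma IsExtendingMap.surjective [Nonempty V] (hp : G.IsExtendingMap p) :
    Function.Surjective p := by
  intro i
  obtain ⟨u⟩ := ‹Nonempty V›
  obtain ⟨v, hv, -⟩ := hp.exists_succ u
  obtain ⟨w, hw, -⟩ := hp.exists_succ v
  have hi : i = p u ∨ i = p v ∨ i = p w := by grind
  rcases hi with rfl | rfl | rfl
  exacts [⟨u, rfl⟩, ⟨v, rfl⟩, ⟨w, rfl⟩]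

lemma xplus_injective : Function.Injective xplus := by
  decide

lemma xminus_injective : Function.Injective xminus := by
  decide

lemma xplus_ne_xminus (i j : Fin 3) : xplus i ≠ xminus j := by
  revert i j; decide

lemma not_extraAdj_xplus_xplus (i j : Fin 3) : ¬ extraAdj (xplus i) (xplus j) := by
  revert i j; decide

lemma not_extraAdj_xminus_xminus (i j : Fin 3) : ¬ extraAdj (xminus i) (xminus j) := by
  revert i j; decide

lemma extraAdj_xplus_xminus_add_one {i j : Fin 3} :
    extraAdj (xplus i) (xminus (j + 1)) ↔ i = j := by
  revert i j; decide

lemma extraAdj_xminus_add_one_xplus {i j : Fin 3} :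
    extraAdj (xminus (i + 1)) (xplus j) ↔ i = j + 1 := by
  revert i j; decide

/-- The part of the 6-extension along the fibres of `p` that retains, for each `s : ι`, the two
new vertices `x⁺_{c s}` (encoded as `inr (inl s)`) and `x⁻_{c s + 1}` (encoded as `inr (inr s)`).
For `c` injective and `ι` of size 3, 2, 1 it is, up to relabelling, the 6-, 4- and 2-extension. -/
def extension (G : OrientedGraph V) (p : V → Fin 3) (c : ι → Fin 3) :
    OrientedGraph (V ⊕ ι ⊕ ι) :=
  (sixExtension G fun i => p ⁻¹' {i}).comap
    (Sum.map id (Sum.elim (fun s => xplus (c s)) fun s => xminus (c s + 1)))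

@[simp, grind =] lemma extension_adj_inl_inl (u v : V) :
    (G.extension p c).adj (.inl u) (.inl v) ↔ G.adj u v := Iff.rfl

@[simp, grind =] lemma extension_adj_inl_xplus (u : V) (s : ι) :
    (G.extension p c).adj (.inl u) (.inr (.inl s)) ↔ p u = c s :=
  ⟨fun ⟨_, hi, hu⟩ => hu.trans (xplus_injective hi).symm, fun h => ⟨_, rfl, h⟩⟩

@[simp, grind .] lemma not_extension_adj_inl_xminus (u : V) (s : ι) :
    ¬ (G.extension p c).adj (.inl u) (.inr (.inr s)) :=
  fun ⟨_, hi, _⟩ => xplus_ne_xminus _ _ hi.symm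

@[simp, grind .] lemma not_extension_adj_xplus_inl (u : V) (s : ι) :
    ¬ (G.extension p c).adj (.inr (.inl s)) (.inl u) :=
  fun ⟨_, hi, _⟩ => xplus_ne_xminus _ _ hi

@[simp, grind =] lemma extension_adj_xminus_inl (u : V) (s : ι) :
    (G.extension p c).adj (.inr (.inr s)) (.inl u) ↔ p u = c s + 1 :=
  ⟨fun ⟨_, hi, hu⟩ => hu.trans (xminus_injective hi).symm, fun h => ⟨_, rfl, h⟩⟩

@[simp, grind .] lemma not_extension_adj_xplus_xplus (s t : ι) :
    ¬ (G.extension p c).adj (.inr (.inl s)) (.inr (.inl t)) :=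
  not_extraAdj_xplus_xplus _ _

@[simp, grind .] lemma not_extension_adj_xminus_xminus (s t : ι) :
    ¬ (G.extension p c).adj (.inr (.inr s)) (.inr (.inr t)) :=
  not_extraAdj_xminus_xminus _ _

@[simp, grind =] lemma extension_adj_xplus_xminus (s t : ι) :
    (G.extension p c).adj (.inr (.inl s)) (.inr (.inr t)) ↔ c s = c t :=
  extraAdj_xplus_xminus_add_one

@[simp, grind =] lemma extension_adj_xminus_xplus (s t : ι) :
    (G.extension p c).adj (.inr (.inr s)) (.inr (.inl t)) ↔ c s = c t + 1 :=
  extraAdj_xminus_add_one_xplus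

lemma deleteArc_extension (u v : V) :
    (G.extension p c).deleteArc (.inl u) (.inl v) = (G.deleteArc u v).extension p c := by
  refine ext_adj ?_
  rintro (x | s | s) (y | t | t) <;> simp [deleteArc]

/-- No new vertex has both an in-neighbour and an out-neighbour among the old vertices, so the new
vertices do not make any two old ones see each other and may simply receive fresh colours. -/
lemma IsColoringBy.extension {C : Type*} {f : V → C} (hf : G.IsColoringBy f) :
    (G.extension p c).IsColoringBy (Sum.map f (id : ι ⊕ ι → ι ⊕ ι)) := by
  rintro (x | s | s) (y | t | t) (u | q | q) (v | r | r) hxy huv hxv hyu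
  case inl.inl.inl.inl => exact hf x y u v hxy huv (Sum.inl_injective hxv) (Sum.inl_injective hyu)
  all_goals grind

lemma chromNum_extension_le [Finite V] [Finite ι] :
    (G.extension p c).chromNum ≤ G.chromNum + 2 * Nat.card ι := by
  obtain ⟨φ, hφ⟩ := G.exists_isColoringBy_fin_chromNum
  have hle := (hφ.extension (p := p) (c := c)).chromNum_le
  rwa [Nat.card_sum, Nat.card_sum, Nat.card_fin, ← two_mul] at hle

lemma card_extension [Finite V] [Finite ι] :
    Nat.card (V ⊕ ι ⊕ ι) = Nat.card V + 2 * Nat.card ι := by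
  rw [Nat.card_sum, Nat.card_sum, ← two_mul]

namespace IsExtendingMap

lemma sees_inl_xplus (hp : G.IsExtendingMap p) (u : V) (s : ι) :
    (G.extension p c).Sees (.inl u) (.inr (.inl s)) := by
  have htrichotomy : p u = c s ∨ p u = c s + 1 ∨ c s = p u + 1 := by grind
  rcases htrichotomy with h | h | h
  · exact .inl (by simpa using h)
  · exact .inr (.inr (.inr ⟨.inr (.inr s), by simp, by simpa using h⟩))
  · obtain ⟨v, hv, huv, -⟩ := hp.exists_succ u
    exact .inr (.inr (.inl ⟨.inl v, by simpa using huv, by simp [hv, h]⟩))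

lemma sees_inl_xminus (hp : G.IsExtendingMap p) (v : V) (s : ι) :
    (G.extension p c).Sees (.inl v) (.inr (.inr s)) := by
  have htrichotomy : p v = c s + 1 ∨ p v = c s ∨ p v = c s + 1 + 1 := by grind
  rcases htrichotomy with h | h | h
  · exact .inr (.inl (by simpa using h))
  · exact .inr (.inr (.inl ⟨.inr (.inl s), by simpa using h, by simp⟩))
  · obtain ⟨u, hu, huv, -⟩ := hp.exists_pred v
    exact .inr (.inr (.inr ⟨.inl u, by simpa using by grind, by simpa using huv⟩))

lemma sees_xplus_xminus [Nonempty V] (hp : G.IsExtendingMap p) (s t : ι) :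
    (G.extension p c).Sees (.inr (.inl s)) (.inr (.inr t)) := by
  have htrichotomy : c s = c t ∨ c t = c s + 1 ∨ c s = c t + 1 := by grind
  rcases htrichotomy with h | h | h
  · exact .inl (by simpa using h)
  · exact .inr (.inl (by simpa using h))
  · obtain ⟨v, hv⟩ := hp.surjective (c s)
    exact .inr (.inr (.inr ⟨.inl v, by simp [hv, h], by simp [hv]⟩))

end IsExtendingMap

lemma sees_xplus_xplus {s t : ι} (h : c s ≠ c t) :
    (G.extension p c).Sees (.inr (.inl s)) (.inr (.inl t)) := by
  have hdichotomy : c s = c t + 1 ∨ c t = c s + 1 := by grind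
  rcases hdichotomy with h | h
  · exact .inr (.inr (.inl ⟨.inr (.inr s), by simp, by simpa using h⟩))
  · exact .inr (.inr (.inr ⟨.inr (.inr t), by simp, by simpa using h⟩))

lemma sees_xminus_xminus {s t : ι} (h : c s ≠ c t) :
    (G.extension p c).Sees (.inr (.inr s)) (.inr (.inr t)) := by
  have hdichotomy : c s = c t + 1 ∨ c t = c s + 1 := by grind
  rcases hdichotomy with h | h
  · exact .inr (.inr (.inl ⟨.inr (.inl t), by simpa using h, by simp⟩))
  · exact .inr (.inr (.inr ⟨.inr (.inl s), by simpa using h, by simp⟩))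

namespace IsExtendingMap

lemma pairwise_sees_extension [Nonempty V] (hp : G.IsExtendingMap p)
    (hc : Function.Injective c) (hG : Pairwise G.Sees) : Pairwise (G.extension p c).Sees := by
  rintro (u | s | s) (v | t | t) hne
  · rcases hG (show u ≠ v by simpa using hne) with h | h | ⟨w, h, h'⟩ | ⟨w, h, h'⟩
    exacts [.inl h, .inr (.inl h), .inr (.inr (.inl ⟨.inl w, h, h'⟩)),
      .inr (.inr (.inr ⟨.inl w, h, h'⟩))]
  · exact hp.sees_inl_xplus u t
  · exact hp.sees_inl_xminus u t
  · exact (hp.sees_inl_xplus v s).symm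
  · exact sees_xplus_xplus (hc.ne (by simpa using hne))
  · exact hp.sees_xplus_xminus s t
  · exact (hp.sees_inl_xminus v s).symm
  · exact (hp.sees_xplus_xminus t s).symm
  · exact sees_xminus_xminus (hc.ne (by simpa using hne))

lemma mergeablePairs_deleteArc_inl_xplus (hp : G.IsExtendingMap p)
    (hc : Function.Injective c) {u w : V} {s : ι} (hus : p u = c s) (hwu : p u = p w + 1)
    (huniq : ∀ x, p x = p u → G.adj w x → x = u) :
    ((G.extension p c).deleteArc (.inl u) (.inr (.inl s))).MergeablePairs
      (.inl w) (.inr (.inl s)) (.inl u) (.inr (.inr s)) := by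
  have hback := hp.ne_add_one
  have hnodup : w ≠ u := by grind
  have hleft : (p w = c s → w = u) ∧ (∀ x, G.adj w x → p x = c s → x = u) ∧
      ∀ t, c s = c t → p w ≠ c t + 1 := by grind
  have hright : p u ≠ c s + 1 ∧ (∀ t, p u = c t → t ≠ s → c t ≠ c s) ∧
      ∀ x, p x = c s + 1 → ¬ G.adj x u := by grind [Function.Injective]
  have hdir : ¬ G.adj u w ∧ p w ≠ c s + 1 := by grind
  exact ⟨by simpa using hnodup, by simpa [Sees, OrientedGraph.deleteArc] using hleft,
    by simpa [Sees, OrientedGraph.deleteArc] using hright,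
    by simpa [OrientedGraph.deleteArc] using hdir⟩

lemma mergeablePairs_deleteArc_xplus_xminus (hp : G.IsExtendingMap p)
    (hc : Function.Injective c) {w w' : V} {s : ι} (hw : p w = c s) (hw' : p w' = c s + 1) :
    ((G.extension p c).deleteArc (.inr (.inl s)) (.inr (.inr s))).MergeablePairs
      (.inl w) (.inr (.inr s)) (.inr (.inl s)) (.inl w') := by
  have hback := hp.ne_add_one
  have hnodup : w ≠ w' := by grind
  have hleft : p w ≠ c s + 1 ∧ (∀ t, p w = c t → c t = c s → t = s) ∧
      ∀ x, p x = c s + 1 → ¬ G.adj x w := by grind [Function.Injective]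
  have hright : p w' ≠ c s ∧ (∀ t, c s = c t → t ≠ s → p w' ≠ c t + 1) ∧
      ∀ x, G.adj w' x → p x ≠ c s := by grind [Function.Injective]
  have hdir : ¬ G.adj w' w := by grind
  exact ⟨by simpa using hnodup, by simpa [Sees, OrientedGraph.deleteArc] using hleft,
    by simpa [Sees, OrientedGraph.deleteArc] using hright,
    by simpa [OrientedGraph.deleteArc] using hdir⟩

lemma mergeablePairs_deleteArc_xminus_inl (hp : G.IsExtendingMap p)
    (hc : Function.Injective c) {v w : V} {s : ι} (hvs : p v = c s + 1) (hwv : p w = p v + 1)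
    (huniq : ∀ x, p x = p v → G.adj x w → x = v) :
    ((G.extension p c).deleteArc (.inr (.inr s)) (.inl v)).MergeablePairs
      (.inr (.inl s)) (.inl v) (.inr (.inr s)) (.inl w) := by
  have hback := hp.ne_add_one
  have hnodup : v ≠ w := by grind
  have hleft : p v ≠ c s ∧ (∀ t, c s = c t → p v = c t + 1 → t = s) ∧
      ∀ x, G.adj v x → p x ≠ c s := by grind [Function.Injective]
  have hright : (p w = c s + 1 → w = v) ∧ (∀ x, p x = c s + 1 → x ≠ v → ¬ G.adj x w) ∧
      ∀ t, p w = c t → c t ≠ c s := by grind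
  have hdir : p w ≠ c s ∧ ¬ G.adj w v := by grind
  exact ⟨by simpa using hnodup, by simpa [Sees, OrientedGraph.deleteArc] using hleft,
    by simpa [Sees, OrientedGraph.deleteArc] using hright,
    by simpa [OrientedGraph.deleteArc] using hdir⟩

end IsExtendingMap

lemma mergeablePairs_deleteArc_xminus_xplus (hc : Function.Injective c) {s t : ι}
    (hst : c s = c t + 1) :
    ((G.extension p c).deleteArc (.inr (.inr s)) (.inr (.inl t))).MergeablePairs
      (.inr (.inl s)) (.inr (.inl t)) (.inr (.inr s)) (.inr (.inr t)) := by
  have hnodup : s ≠ t := by grind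
  have hleft : (∀ r, c s = c r → c r = c t + 1 → r = s) ∧
      ∀ r, c t = c r → c r = c s + 1 → r = s ∧ s = t := by grind [Function.Injective]
  have hright : (∀ r, c s = c r + 1 → r ≠ t → c r ≠ c t) ∧
      ∀ r, c t = c r + 1 → (t = s → r ≠ t) → c r ≠ c s := by grind [Function.Injective]
  have hdir : c t = c s + 1 → t = s ∧ s = t := by grind
  exact ⟨by simpa using hnodup, by simpa [Sees, OrientedGraph.deleteArc] using hleft,
    by simpa [Sees, OrientedGraph.deleteArc] using hright,
    by simpa [OrientedGraph.deleteArc] using hdir⟩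

lemma mergeablePairs_deleteArc_inl_inl {u v : V} {s t : ι}
    (hvu : p v = p u + 1) (huniq : ∀ x, p x = p v → G.adj u x → x = v)
    (huniq' : ∀ x, p x = p u → G.adj x v → x = u) (hs : p v = c s) (ht : p u = c t + 1) :
    ((G.extension p c).deleteArc (.inl u) (.inl v)).MergeablePairs
      (.inl v) (.inr (.inr t)) (.inl u) (.inr (.inl s)) := by
  have hnodup : v ≠ u := by grind
  have hleft : p v ≠ c t + 1 ∧ (∀ r, p v = c r → c r ≠ c t) ∧
      ∀ x, p x = c t + 1 → G.adj x v → x = u := by grind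
  have hright : p u ≠ c s ∧ (∀ x, G.adj u x → x ≠ v → p x ≠ c s) ∧
      ∀ r, c s = c r → p u ≠ c r + 1 := by grind
  have hdir : c s ≠ c t := by grind
  exact ⟨by simpa using hnodup, by simpa [Sees, OrientedGraph.deleteArc] using hleft,
    by simpa [Sees, OrientedGraph.deleteArc] using hright,
    by simpa [OrientedGraph.deleteArc] using hdir⟩

namespace IsExtendingMap

theorem isDeeplyCriticalClique_extension [Finite V] [Nonempty V] [Finite ι]
    (hp : G.IsExtendingMap p) (hc : Function.Injective c) (hG : Pairwise G.Sees)
    (hold : ∀ u v, G.adj u v →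
      ((G.extension p c).deleteArc (.inl u) (.inl v)).chromNum + 2 ≤ Nat.card (V ⊕ ι ⊕ ι)) :
    (G.extension p c).IsDeeplyCriticalClique := by
  refine isDeeplyCriticalClique_iff.2 ⟨hp.pairwise_sees_extension hc hG, ?_⟩
  rintro (u | s | s) (v | t | t) hxy
  · exact hold u v hxy
  · have hut : p u = c t := (extension_adj_inl_xplus u t).1 hxy
    obtain ⟨w, hw, -, huniq⟩ := hp.exists_pred u
    exact (hp.mergeablePairs_deleteArc_inl_xplus hc hut hw huniq).chromNum_add_two_le
  · exact (not_extension_adj_inl_xminus u t hxy).elim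
  · exact (not_extension_adj_xplus_inl v s hxy).elim
  · exact (not_extension_adj_xplus_xplus s t hxy).elim
  · obtain rfl : s = t := hc ((extension_adj_xplus_xminus s t).1 hxy)
    obtain ⟨w, hw⟩ := hp.surjective (c s)
    obtain ⟨w', hw'⟩ := hp.surjective (c s + 1)
    exact (hp.mergeablePairs_deleteArc_xplus_xminus hc hw hw').chromNum_add_two_le
  · have hvs : p v = c s + 1 := (extension_adj_xminus_inl v s).1 hxy
    obtain ⟨w, hw, -, huniq⟩ := hp.exists_succ v
    exact (hp.mergeablePairs_deleteArc_xminus_inl hc hvs hw huniq).chromNum_add_two_le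
  · have hst : c s = c t + 1 := (extension_adj_xminus_xplus s t).1 hxy
    exact (mergeablePairs_deleteArc_xminus_xplus hc hst).chromNum_add_two_le
  · exact (not_extension_adj_xminus_xminus s t hxy).elim

end IsExtendingMap

theorem IsDeeplyCriticalClique.extension [Finite V] [Nonempty V] [Finite ι]
    (hG : G.IsDeeplyCriticalClique) (hp : G.IsExtendingMap p) (hc : Function.Injective c) :
    (G.extension p c).IsDeeplyCriticalClique := by
  obtain ⟨hsees, hdel⟩ := isDeeplyCriticalClique_iff.1 hG
  refine hp.isDeeplyCriticalClique_extension hc hsees fun u v huv => ?_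
  calc ((G.extension p c).deleteArc (.inl u) (.inl v)).chromNum + 2
      = ((G.deleteArc u v).extension p c).chromNum + 2 := by rw [deleteArc_extension]
    _ ≤ (G.deleteArc u v).chromNum + 2 * Nat.card ι + 2 :=
        Nat.add_le_add_right chromNum_extension_le 2
    _ ≤ Nat.card V + 2 * Nat.card ι := by
        have := hdel u v huv
        omega
    _ = Nat.card (V ⊕ ι ⊕ ι) := card_extension.symm

theorem IsExtendingMap.extension (hp : G.IsExtendingMap p) :
    (G.extension p (id : Fin 3 → Fin 3)).IsExtendingMap
      (Sum.elim p (Sum.elim id fun s => s + 1)) := by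
  refine ⟨?_, ?_, ?_⟩
  · rintro (u | s | s) (v | t | t) <;> grind [hp.ne_add_one]
  · rintro (u | s | s)
    · obtain ⟨v, hv, huv, huniq⟩ := hp.exists_succ u
      refine ⟨.inl v, hv, huv, ?_⟩
      rintro (w | t | t) <;> grind
    · refine ⟨.inr (.inr s), rfl, by grind, ?_⟩
      rintro (w | t | t) <;> grind
    · refine ⟨.inr (.inl (s + 2)), by grind, by grind, ?_⟩
      rintro (w | t | t) <;> grind
  · rintro (v | t | t)
    · obtain ⟨u, hu, huv, huniq⟩ := hp.exists_pred v
      refine ⟨.inl u, hu, huv, ?_⟩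
      rintro (w | s | s) <;> grind
    · refine ⟨.inr (.inr (t + 1)), by grind, by grind, ?_⟩
      rintro (w | s | s) <;> grind
    · refine ⟨.inr (.inl t), rfl, by grind, ?_⟩
      rintro (w | s | s) <;> grind

end Extension

section Triangle

/-- The directed triangle. It is an extendable clique, although not a deeply critical one, and its
6-extension is the smallest graph of the construction. -/
def triangle : OrientedGraph (Fin 3) where
  adj i j := j = i + 1
  irrefl := by decide
  antisymm := by decide

lemma isExtendingMap_triangle : triangle.IsExtendingMap id := by
  refine ⟨?_, fun u => ⟨u + 1, rfl, rfl, fun w hw _ => hw⟩,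
    fun v => ⟨v - 1, by grind, by grind [triangle], fun w hw _ => hw⟩⟩
  simp only [triangle, id]
  decide

lemma pairwise_sees_triangle : Pairwise triangle.Sees := by
  intro i j hne
  have hij : j = i + 1 ∨ i = j + 1 := by grind
  exact hij.imp id .inl

theorem isDeeplyCriticalClique_extension_triangle :
    (triangle.extension id (id : Fin 3 → Fin 3)).IsDeeplyCriticalClique := by
  refine isExtendingMap_triangle.isDeeplyCriticalClique_extension Function.injective_id
    pairwise_sees_triangle fun u v huv => ?_
  exact (mergeablePairs_deleteArc_inl_inl (p := id) (s := v) (t := u + 2) huv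
    (fun _ h _ => h) (fun _ h _ => h) rfl (by grind)).chromNum_add_two_le

end Triangle

section Construction

theorem exists_extendable_isDeeplyCriticalClique (k : ℕ) :
    ∃ (V : Type) (_ : Finite V) (G : OrientedGraph V),
      Nat.card V = 9 + 6 * k ∧ G.IsDeeplyCriticalClique ∧ G.Extendable := by
  induction k with
  | zero =>
    exact ⟨_, inferInstance, _, by simp, isDeeplyCriticalClique_extension_triangle,
      extendable_iff_exists_isExtendingMap.2 ⟨_, isExtendingMap_triangle.extension⟩⟩
  | succ k ih =>
    obtain ⟨V, _, G, hcard, hG, hext⟩ := ih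
    obtain ⟨p, hp⟩ := extendable_iff_exists_isExtendingMap.1 hext
    have : Nonempty V := (Nat.card_pos_iff.1 (by omega)).1
    refine ⟨_, inferInstance, _, ?_, hG.extension hp Function.injective_id,
      extendable_iff_exists_isExtendingMap.2 ⟨_, hp.extension⟩⟩
    rw [card_extension, hcard, Nat.card_fin]
    ring

theorem exists_isDeeplyCriticalClique_card_eq (k : ℕ) {r : ℕ} (hr : r ≤ 3) :
    ∃ (V : Type) (_ : Finite V) (G : OrientedGraph V),
      Nat.card V = 9 + 6 * k + 2 * r ∧ G.IsDeeplyCriticalClique := by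
  obtain ⟨V, _, G, hcard, hG, hext⟩ := exists_extendable_isDeeplyCriticalClique k
  obtain ⟨p, hp⟩ := extendable_iff_exists_isExtendingMap.1 hext
  have : Nonempty V := (Nat.card_pos_iff.1 (by omega)).1
  refine ⟨_, inferInstance, _, ?_, hG.extension hp (Fin.castLE_injective hr)⟩
  rw [card_extension, hcard, Nat.card_fin]

end Construction

end OrientedGraph

/-- For every odd integer `n ≥ 9`, there exists a deeply critical oriented
clique on `n` vertices. -/
theorem stmt1 (n : ℕ) (hn : 9 ≤ n) (hodd : Odd n) :
    ∃ G : OrientedGraph (Fin n), G.IsDeeplyCriticalClique := by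
  obtain ⟨m, rfl⟩ := hodd
  have hr : (m - 4) % 3 ≤ 3 := (Nat.mod_lt _ three_pos).le
  obtain ⟨V, _, G, hcard, hG⟩ :=
    OrientedGraph.exists_isDeeplyCriticalClique_card_eq ((m - 4) / 3) hr
  have hn' : Nat.card V = 2 * m + 1 := by omega
  exact ⟨_, hG.comap_equiv (Finite.equivFinOfCardEq hn').symm⟩
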